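/- arXiv:1506.06523 — 3 statements merged into one kernel-verified Lean document; each statement's English description precedes it below -/
import Mathlib

section
/- Let A be a unital complex C*-algebra, let a, b be positive invertible elements of A and let g ∈ A be invertible. Then for every real t, g·γ_{a,b}(t)·g* = γ_{g a g*, g b g*}(t), i.e. g a^{1/2}(a^{-1/2} b a^{-1/2})^t a^{1/2} g* = (g a g*)^{1/2} ((g a g*)^{-1/2} (g b g*) (g a g*)^{-1/2})^t (g a g*)^{1/2}. In other words, the action g·a = g a g* maps geodesics to geodesics. -/
/-- An element of a unital C*-algebra is *positive invertible* if it is self-adjoint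
with spectrum contained in `(0, ∞)`. -/
def IsPosInv {A : Type*} [CStarAlgebra A] (a : A) : Prop :=
  IsSelfAdjoint a ∧ spectrum ℝ a ⊆ Set.Ioi (0 : ℝ)

/-- Real powers `a ^ t` defined by the continuous functional calculus. -/
noncomputable def cpow {A : Type*} [CStarAlgebra A] (a : A) (t : ℝ) : A :=
  cfc (fun x : ℝ => x ^ t) a

/-- The logarithm defined by the continuous functional calculus. -/
noncomputable def clog {A : Type*} [CStarAlgebra A] (a : A) : A :=
  cfc Real.log a

/-- The metric `d(x, y) = ‖log (x^{-1/2} y x^{-1/2})‖` on positive invertible elements. -/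
noncomputable def dd {A : Type*} [CStarAlgebra A] (x y : A) : ℝ :=
  ‖clog (cpow x (-(1/2)) * y * cpow x (-(1/2)))‖

/-- The geodesic `γ_{a,b}(t) = a^{1/2} (a^{-1/2} b a^{-1/2})^t a^{1/2}`. -/
noncomputable def geo {A : Type*} [CStarAlgebra A] (a b : A) (t : ℝ) : A :=
  cpow a (1/2) * cpow (cpow a (-(1/2)) * b * cpow a (-(1/2))) t * cpow a (1/2)

/-- The distance from a point to a subset. -/
noncomputable def distSet {A : Type*} [CStarAlgebra A] (x : A) (C : Set A) : ℝ :=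
  sInf {r : ℝ | ∃ c ∈ C, r = dd x c}

/-- The distance between two subsets. -/
noncomputable def distSets {A : Type*} [CStarAlgebra A] (C D : Set A) : ℝ :=
  sInf {r : ℝ | ∃ x ∈ C, ∃ y ∈ D, r = dd x y}

/-- The orbit `O_H(1) = {h h* : h ∈ H}` of the identity under the action `h · a = h a h*`. -/
def orbitOne {A : Type*} [CStarAlgebra A] (H : Subgroup Aˣ) : Set A :=
  {x : A | ∃ h ∈ H, x = (h : A) * star (h : A)}

/-- The fixed point set `P^H = {a positive invertible : h a h* = a for all h ∈ H}`. -/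
def fixedSet {A : Type*} [CStarAlgebra A] (H : Subgroup Aˣ) : Set A :=
  {a : A | IsPosInv a ∧ ∀ h ∈ H, (h : A) * a * star (h : A) = a}

/-- The similarity number `Sim(H) = inf {‖s‖ ‖s⁻¹‖ : s a unitarizer of H}`. -/
noncomputable def simNum {A : Type*} [CStarAlgebra A] (H : Subgroup Aˣ) : ℝ :=
  sInf {c : ℝ | ∃ s : Aˣ, (∀ h ∈ H, (↑s⁻¹ : A) * (h : A) * (s : A) ∈ unitary A) ∧
    c = ‖(s : A)‖ * ‖(↑s⁻¹ : A)‖}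

/-- The set of norms of elements of `H`; its supremum is the size `|H|`. -/
def normSet {A : Type*} [CStarAlgebra A] (H : Subgroup Aˣ) : Set ℝ :=
  {r : ℝ | ∃ h ∈ H, r = ‖(h : A)‖}

/-- The orbit diameter function `D_H(a) = sup_{h ∈ H} d(a, h a h*)`. -/
noncomputable def orbDiam {A : Type*} [CStarAlgebra A] (H : Subgroup Aˣ) (a : A) : ℝ :=
  sSup {r : ℝ | ∃ h ∈ H, r = dd a ((h : A) * a * star (h : A))}

/-- The size `|p H q| = sup_{h ∈ H} ‖p h q‖` of the conjugated family `p H q`. -/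
noncomputable def sizeConj {A : Type*} [CStarAlgebra A] (H : Subgroup Aˣ) (p q : A) : ℝ :=
  sSup {c : ℝ | ∃ h ∈ H, c = ‖p * (h : A) * q‖}

/-- The similarity number `Sim(p H q)` of the conjugated family `p H q`. -/
noncomputable def simConj {A : Type*} [CStarAlgebra A] (H : Subgroup Aˣ) (p q : A) : ℝ :=
  sInf {c : ℝ | ∃ u : Aˣ, (∀ h ∈ H, (↑u⁻¹ : A) * (p * (h : A) * q) * (u : A) ∈ unitary A) ∧
    c = ‖(u : A)‖ * ‖(↑u⁻¹ : A)‖}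

/-- The geodesic `γ_{r², s²}(t) = r (r⁻¹ s² r⁻¹)^t r` for positive invertible `r`, `s`. -/
noncomputable def gammaRS {A : Type*} [CStarAlgebra A] (r s : Aˣ) (t : ℝ) : A :=
  (r : A) * cpow ((↑r⁻¹ : A) * ((s : A) * (s : A)) * (↑r⁻¹ : A)) t * (r : A)

/-!
In `a^{1/2} f(a^{-1/2} b a^{-1/2}) a^{1/2}` the square root `a^{1/2}` may be replaced by any
invertible `h` with `h h* = a`, provided the outer factor on the right becomes `h*` and the
argument of `f` becomes `h⁻¹ b (h⁻¹)*`: the element `a^{-1/2} h` is unitary, and the functional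
calculus commutes with conjugation by a unitary. For `g a g*` one may take `h = g a^{1/2}`, and then
`h⁻¹ (g b g*) (h⁻¹)* = a^{-1/2} b a^{-1/2}`, so that `g` and `g*` come out as outer factors.
-/

section StarConj

variable {M : Type*} [Monoid M] [StarMul M]

/-- The action `g · x = g x g*` of the invertible elements. It is a plain function rather than an
instance because `Mˣ` already acts on `M` by left multiplication. -/
def starConj (g : Mˣ) (x : M) : M :=
  (g : M) * x * star (g : M)

lemma starConj_mul (g h : Mˣ) (x : M) : starConj (g * h) x = starConj g (starConj h x) := by
  simp only [starConj, Units.val_mul, star_mul, mul_assoc]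

lemma starConj_inv_starConj (g : Mˣ) (x : M) : starConj g⁻¹ (starConj g x) = x := by
  rw [← starConj_mul, inv_mul_cancel]
  simp only [starConj, Units.val_one, star_one, one_mul, mul_one]

lemma starConj_starConj_inv (g : Mˣ) (x : M) : starConj g (starConj g⁻¹ x) = x := by
  simpa only [inv_inv] using starConj_inv_starConj g⁻¹ x

lemma isSelfAdjoint_starConj {x : M} (hx : IsSelfAdjoint x) (g : Mˣ) :
    IsSelfAdjoint (starConj g x) :=
  hx.conjugate (g : M)

lemma starConj_mul_star_self (g h : Mˣ) :
    starConj g (h * star (h : M)) = ↑(g * h) * star (↑(g * h) : M) := by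
  simp only [starConj, Units.val_mul, star_mul, mul_assoc]

lemma inv_mul_mem_unitary_of_mul_star_eq {r h : Mˣ}
    (hrh : (r : M) * star (r : M) = h * star (h : M)) : (↑(r⁻¹ * h) : M) ∈ unitary M := by
  refine (r⁻¹ * h).isUnit.mem_unitary_of_mul_star_self ?_
  calc (↑(r⁻¹ * h) : M) * star (↑(r⁻¹ * h) : M)
      = starConj r⁻¹ (r * star (r : M)) := by rw [← starConj_mul_star_self, hrh]
    _ = 1 := by
        rw [starConj_mul_star_self, inv_mul_cancel, Units.val_one, star_one, mul_one]

end StarConj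

section CStarAlgebra

variable {A : Type*} [CStarAlgebra A] {a b x : A} {f : ℝ → ℝ} {h r u : Aˣ}

lemma starConj_cfc_of_mem_unitary (hu : (u : A) ∈ unitary A) (hx : IsSelfAdjoint x)
    (hf : ContinuousOn f (spectrum ℝ x)) :
    starConj u (cfc f x) = cfc f (starConj u x) := by
  let conj_u := Unitary.conjStarAlgAut ℂ A ⟨u, hu⟩
  have continuous_conj_u : Continuous conj_u :=
    (continuous_const.mul continuous_id).mul continuous_const
  exact StarAlgHomClass.map_cfc (S := ℂ) conj_u f x hf continuous_conj_u hx (hx.map conj_u)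

theorem starConj_cfc_starConj_inv_congr (hrh : (r : A) * star (r : A) = h * star (h : A))
    (hb : IsSelfAdjoint b) (hf : ContinuousOn f (spectrum ℝ (starConj h⁻¹ b))) :
    starConj r (cfc f (starConj r⁻¹ b)) = starConj h (cfc f (starConj h⁻¹ b)) := by
  have inv_mul_mem_unitary : (↑(r⁻¹ * h) : A) ∈ unitary A := inv_mul_mem_unitary_of_mul_star_eq hrh
  calc starConj r (cfc f (starConj r⁻¹ b))
      = starConj r (cfc f (starConj (r⁻¹ * h) (starConj h⁻¹ b))) := by
        rw [starConj_mul, starConj_starConj_inv]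
    _ = starConj r (starConj (r⁻¹ * h) (cfc f (starConj h⁻¹ b))) := by
        rw [starConj_cfc_of_mem_unitary inv_mul_mem_unitary (isSelfAdjoint_starConj hb h⁻¹) hf]
    _ = starConj h (cfc f (starConj h⁻¹ b)) := by
        rw [← starConj_mul, mul_inv_cancel_left]

section SpectralOrder

attribute [local instance] CStarAlgebra.spectralOrder CStarAlgebra.spectralOrderedRing

lemma isPosInv_iff_isStrictlyPositive : IsPosInv a ↔ IsStrictlyPositive a :=
  CStarAlgebra.isStrictlyPositive_iff_isSelfAdjoint_and_spectrum_pos.symm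

lemma IsPosInv.isStrictlyPositive (ha : IsPosInv a) : IsStrictlyPositive a :=
  isPosInv_iff_isStrictlyPositive.mp ha

lemma isPosInv_mul_star_self (h : Aˣ) : IsPosInv ((h : A) * star (h : A)) :=
  isPosInv_iff_isStrictlyPositive.mpr <|
    CStarAlgebra.isStrictlyPositive_iff_eq_mul_star_self.mpr ⟨h, h.isUnit, rfl⟩

lemma isPosInv_starConj (ha : IsPosInv a) (g : Aˣ) : IsPosInv (starConj g a) :=
  isPosInv_iff_isStrictlyPositive.mpr <|
    g.isUnit.isStrictlyPositive_star_right_conjugate_iff.mpr ha.isStrictlyPositive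

lemma IsPosInv.cpow_eq_rpow (ha : IsPosInv a) (t : ℝ) : cpow a t = a ^ t :=
  (CFC.rpow_eq_cfc_real ha.isStrictlyPositive.nonneg).symm

lemma IsPosInv.cpow_add (ha : IsPosInv a) (s t : ℝ) : cpow a (s + t) = cpow a s * cpow a t := by
  simp only [ha.cpow_eq_rpow, CFC.rpow_add ha.isStrictlyPositive.isUnit]

lemma IsPosInv.cpow_zero (ha : IsPosInv a) : cpow a 0 = 1 := by
  rw [ha.cpow_eq_rpow, CFC.rpow_zero a ha.isStrictlyPositive.nonneg]

lemma IsPosInv.cpow_one (ha : IsPosInv a) : cpow a 1 = a := by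
  rw [ha.cpow_eq_rpow, CFC.rpow_one a ha.isStrictlyPositive.nonneg]

end SpectralOrder

lemma IsPosInv.continuousOn_rpow (ha : IsPosInv a) (t : ℝ) :
    ContinuousOn (fun y : ℝ => y ^ t) (spectrum ℝ a) :=
  continuousOn_id.rpow_const fun _ hy => Or.inl (ha.2 hy).ne'

lemma star_cpow (a : A) (t : ℝ) : star (cpow a t) = cpow a t :=
  (cfc_predicate (fun y : ℝ => y ^ t) a : IsSelfAdjoint _).star_eq

/-- The real power `a ^ t` of a positive invertible element as a unit, with inverse `a ^ (-t)`,
so that `starConj` applies to it. -/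
noncomputable def IsPosInv.cpowUnit (ha : IsPosInv a) (t : ℝ) : Aˣ where
  val := cpow a t
  inv := cpow a (-t)
  val_inv := by rw [← ha.cpow_add, add_neg_cancel, ha.cpow_zero]
  inv_val := by rw [← ha.cpow_add, neg_add_cancel, ha.cpow_zero]

lemma IsPosInv.starConj_cpowUnit (ha : IsPosInv a) (t : ℝ) (x : A) :
    starConj (ha.cpowUnit t) x = cpow a t * x * cpow a t :=
  congrArg (cpow a t * x * ·) (star_cpow a t)

lemma IsPosInv.cpow_mul_mul_cpow (ha : IsPosInv a) (hb : IsPosInv b) (t : ℝ) :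
    IsPosInv (cpow a t * b * cpow a t) :=
  ha.starConj_cpowUnit t b ▸ isPosInv_starConj hb (ha.cpowUnit t)

lemma IsPosInv.starConj_inv_cpowUnit (ha : IsPosInv a) (t : ℝ) (x : A) :
    starConj (ha.cpowUnit t)⁻¹ x = cpow a (-t) * x * cpow a (-t) :=
  congrArg (cpow a (-t) * x * ·) (star_cpow a (-t))

lemma IsPosInv.cpowUnit_half_mul_star_self (ha : IsPosInv a) :
    (ha.cpowUnit (1 / 2) : A) * star (ha.cpowUnit (1 / 2) : A) = a := by
  change cpow a (1 / 2) * star (cpow a (1 / 2)) = a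
  rw [star_cpow, ← ha.cpow_add, add_halves, ha.cpow_one]

/-- The operator perspective `a^{1/2} f(a^{-1/2} b a^{-1/2}) a^{1/2}` of a function `f`, which
replaces the power `(· ^ t)` in the geodesic `geo a b t`. -/
noncomputable def perspective (f : ℝ → ℝ) (a b : A) : A :=
  cpow a (1 / 2) * cfc f (cpow a (-(1 / 2)) * b * cpow a (-(1 / 2))) * cpow a (1 / 2)

lemma IsPosInv.perspective_eq_starConj (ha : IsPosInv a) (f : ℝ → ℝ) (b : A) :
    perspective f a b = starConj (ha.cpowUnit (1 / 2))
      (cfc f (starConj (ha.cpowUnit (1 / 2))⁻¹ b)) := by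
  rw [ha.starConj_cpowUnit, ha.starConj_inv_cpowUnit, perspective]

theorem perspective_mul_star_self (h : Aˣ) (hb : IsSelfAdjoint b)
    (hf : ContinuousOn f (spectrum ℝ (starConj h⁻¹ b))) :
    perspective f (h * star (h : A)) b = starConj h (cfc f (starConj h⁻¹ b)) := by
  have ha : IsPosInv ((h : A) * star (h : A)) := isPosInv_mul_star_self h
  rw [ha.perspective_eq_starConj]
  exact starConj_cfc_starConj_inv_congr ha.cpowUnit_half_mul_star_self hb hf

theorem stmt1_general (ha : IsPosInv a) (hb : IsSelfAdjoint b)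
    (hf : ContinuousOn f (spectrum ℝ (cpow a (-(1 / 2)) * b * cpow a (-(1 / 2))))) (g : Aˣ) :
    (g : A) * perspective f a b * star (g : A) =
      perspective f ((g : A) * a * star (g : A)) ((g : A) * b * star (g : A)) := by
  set r := ha.cpowUnit (1 / 2)
  have inv_action : starConj (g * r)⁻¹ (starConj g b) = starConj r⁻¹ b := by
    rw [mul_inv_rev, starConj_mul, starConj_inv_starConj]
  rw [← ha.starConj_inv_cpowUnit, ← inv_action] at hf
  calc starConj g (perspective f a b)
      = starConj (g * r) (cfc f (starConj r⁻¹ b)) := by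
        rw [ha.perspective_eq_starConj, starConj_mul]
    _ = starConj (g * r) (cfc f (starConj (g * r)⁻¹ (starConj g b))) := by rw [inv_action]
    _ = perspective f (↑(g * r) * star (↑(g * r) : A)) (starConj g b) :=
        (perspective_mul_star_self (g * r) (isSelfAdjoint_starConj hb g) hf).symm
    _ = perspective f (starConj g a) (starConj g b) := by
        rw [← starConj_mul_star_self, ha.cpowUnit_half_mul_star_self]

end CStarAlgebra

/-- The action `g · a = g a g*` maps geodesics to geodesics. -/
theorem stmt1 {A : Type*} [CStarAlgebra A] (a b : A) (ha : IsPosInv a) (hb : IsPosInv b)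
    (g : Aˣ) (t : ℝ) :
    (g : A) * geo a b t * star (g : A) =
      geo ((g : A) * a * star (g : A)) ((g : A) * b * star (g : A)) t :=
  stmt1_general ha hb.1 ((ha.cpow_mul_mul_cpow hb (-(1 / 2))).continuousOn_rpow t) g
end

section
/- Let A be a unital complex C*-algebra and H a unitarizable subgroup of Aˣ (there exists an invertible s ∈ A with s⁻¹ h s unitary for all h ∈ H). Then dist(O_H(1), P^H) = dist(1, P^H) = log(Sim(H)), where O_H(1) = {h h* : h ∈ H}, P^H = {a positive invertible : h a h* = a for all h ∈ H}, dist denotes the infimum of the metric d(a,b) = ‖log(a^{-1/2} b a^{-1/2})‖ between the corresponding sets, and Sim(H) = inf{‖s‖‖s⁻¹‖ : s ∈ Aˣ, s⁻¹ H s consists of unitaries}. -/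
/-!
An invertible `s` unitarizes `H` if and only if `s s*` is fixed by `H`, and every positive
invertible element has the form `s s*`. Moreover `‖log (s s*)‖` is twice the larger of `log ‖s‖` and
`log ‖s⁻¹‖`, hence at least `log (‖s‖ ‖s⁻¹‖)`, with equality when `‖s‖ = ‖s⁻¹‖`. Rescaling `s` by a
real number achieves `‖s‖ = ‖s⁻¹‖` and changes neither `‖s‖ ‖s⁻¹‖` nor whether `s` is a unitarizer,
so `dist(1, P^H)` is the infimum of `log (‖s‖ ‖s⁻¹‖)` over all unitarizers. Finally, the action
`h · a = h a h*` is isometric, so `d(h h*, y) = d(1, y)` for every fixed point `y` of `H`.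
-/

section Unitarizer

/-- `s` is a *unitarizer* of `H`: the conjugate group `s⁻¹ H s` consists of unitaries. -/
def IsUnitarizer {R : Type*} [Monoid R] [StarMul R] (H : Subgroup Rˣ) (s : Rˣ) : Prop :=
  ∀ h ∈ H, (↑s⁻¹ : R) * (h : R) * (s : R) ∈ unitary R

theorem inv_mul_mul_mem_unitary_iff {R : Type*} [Monoid R] [StarMul R] (s h : Rˣ) :
    (↑s⁻¹ : R) * (h : R) * (s : R) ∈ unitary R ↔
      (h : R) * ((s : R) * star (s : R)) * star (h : R) = (s : R) * star (s : R) := by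
  have hstar : star (↑s⁻¹ : R) * star (s : R) = 1 := by rw [← star_mul, s.mul_inv, star_one]
  have hu : IsUnit ((↑s⁻¹ : R) * (h : R) * (s : R)) := (s⁻¹ * h * s).isUnit
  rw [hu.mem_unitary_iff_mul_star_self, ← s.mul_right_inj, ← s.isUnit.star.mul_left_inj]
  simp [mul_assoc, hstar]

theorem IsUnitarizer.smul {R G : Type*} [Monoid R] [StarMul R] [Group G] [MulAction G R]
    [SMulCommClass G R R] [IsScalarTower G R R] {H : Subgroup Rˣ} {s : Rˣ}
    (hs : IsUnitarizer H s) (r : G) : IsUnitarizer H (r • s) := fun h hh => by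
  simpa [Units.smul_inv, mul_smul_comm, smul_mul_assoc] using hs h hh

end Unitarizer

section ConditionNumber

/-- The condition number `‖s‖ ‖s⁻¹‖` of an invertible element; `simNum` is its infimum over
unitarizers. -/
noncomputable def condNum {R : Type*} [NormedRing R] (s : Rˣ) : ℝ :=
  ‖(s : R)‖ * ‖(↑s⁻¹ : R)‖

theorem one_le_condNum {R : Type*} [NormedRing R] [NormOneClass R] (s : Rˣ) : 1 ≤ condNum s := by
  simpa [condNum] using norm_mul_le (s : R) (↑s⁻¹ : R)

variable {R : Type*} [NormedRing R] [NormedAlgebra ℝ R]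

theorem condNum_smul (r : ℝˣ) (s : Rˣ) : condNum (r • s) = condNum s := by
  have hr : ‖(r : ℝ)‖ ≠ 0 := norm_ne_zero_iff.2 r.ne_zero
  simp only [condNum, Units.smul_inv, Units.val_smul, Units.smul_def, norm_smul,
    Units.val_inv_eq_inv_val, norm_inv]
  field_simp

theorem exists_norm_smul_eq_norm_inv [Nontrivial R] (s : Rˣ) :
    ∃ r : ℝˣ, ‖(↑(r • s) : R)‖ = ‖(↑(r • s)⁻¹ : R)‖ := by
  have hs : 0 < ‖(s : R)‖ := norm_pos_iff.2 s.ne_zero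
  have hs' : 0 < ‖(↑s⁻¹ : R)‖ := norm_pos_iff.2 s⁻¹.ne_zero
  set r : ℝ := √(‖(↑s⁻¹ : R)‖ / ‖(s : R)‖)
  have hr : 0 < r := Real.sqrt_pos.2 (div_pos hs' hs)
  have hrr : r * r = ‖(↑s⁻¹ : R)‖ / ‖(s : R)‖ := Real.mul_self_sqrt (div_pos hs' hs).le
  refine ⟨Units.mk0 r hr.ne', ?_⟩
  simp only [Units.smul_inv, Units.val_smul, Units.smul_def, norm_smul, Units.val_inv_eq_inv_val,
    norm_inv, Units.val_mk0, Real.norm_of_nonneg hr.le]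
  rw [eq_inv_mul_iff_mul_eq₀ hr.ne', ← mul_assoc, hrr, div_mul_cancel₀ _ hs.ne']

end ConditionNumber

theorem log_csInf {S : Set ℝ} (hne : S.Nonempty) {b : ℝ} (hb : 0 < b) (hS : b ∈ lowerBounds S) :
    Real.log (sInf S) = sInf (Real.log '' S) := by
  have hpos : 0 < sInf S := hb.trans_le (le_csInf hne hS)
  exact (Real.strictMonoOn_log.monotoneOn.mono fun x hx =>
    hb.trans_le (hS hx)).map_csInf_of_continuousWithinAt
      (Real.continuousAt_log hpos.ne').continuousWithinAt hne ⟨b, hS⟩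

section FunctionalCalculus

variable {A : Type*} [CStarAlgebra A]

theorem cfc_unitary_conj (u : unitary A) {f : ℝ → ℝ} {a : A} (ha : IsSelfAdjoint a)
    (hf : ContinuousOn f (spectrum ℝ a)) :
    cfc f ((u : A) * a * star (u : A)) = u * cfc f a * star (u : A) := by
  have hcont : Continuous (Unitary.conjStarAlgAut ℝ A u) := by
    change Continuous fun x : A => (u : A) * x * star (u : A)
    fun_prop
  exact (StarAlgHomClass.map_cfc (S := ℝ) (Unitary.conjStarAlgAut ℝ A u) f a hf hcont ha
    (ha.conjugate _)).symm

theorem isPosInv_iff_exists_mul_star {a : A} :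
    IsPosInv a ↔ ∃ s : Aˣ, (s : A) * star (s : A) = a := by
  let _ := CStarAlgebra.spectralOrder A
  let _ := CStarAlgebra.spectralOrderedRing A
  calc IsPosInv a ↔ IsStrictlyPositive a :=
        CStarAlgebra.isStrictlyPositive_iff_isSelfAdjoint_and_spectrum_pos.symm
    _ ↔ ∃ b, IsUnit b ∧ a = b * star b := CStarAlgebra.isStrictlyPositive_iff_eq_mul_star_self
    _ ↔ ∃ s : Aˣ, (s : A) * star (s : A) = a :=
      ⟨fun ⟨_, ⟨s, hs⟩, h⟩ => ⟨s, by rw [hs, h]⟩, fun ⟨s, h⟩ => ⟨s, s.isUnit, h.symm⟩⟩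

theorem isPosInv_mul_star (s : Aˣ) : IsPosInv ((s : A) * star (s : A)) :=
  isPosInv_iff_exists_mul_star.2 ⟨s, rfl⟩

theorem IsPosInv.conj {a : A} (ha : IsPosInv a) (g : Aˣ) :
    IsPosInv ((g : A) * a * star (g : A)) := by
  obtain ⟨s, rfl⟩ := isPosInv_iff_exists_mul_star.1 ha
  simpa [mul_assoc] using isPosInv_mul_star (g * s)

theorem IsPosInv.continuousOn_log {a : A} (ha : IsPosInv a) :
    ContinuousOn Real.log (spectrum ℝ a) :=
  Real.continuousOn_log.mono fun _ hx => (ha.2 hx).ne'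

theorem norm_clog_unitary_conj (u : unitary A) {a : A} (ha : IsPosInv a) :
    ‖clog ((u : A) * a * star (u : A))‖ = ‖clog a‖ := by
  rw [clog, cfc_unitary_conj u ha.1 ha.continuousOn_log, ← Unitary.coe_star,
    CStarRing.norm_mul_coe_unitary, CStarRing.norm_coe_unitary_mul, clog]

theorem cpow_neg_half_mul_mul_cpow_neg_half {a : A} (ha : IsPosInv a) :
    cpow a (-(1/2)) * a * cpow a (-(1/2)) = 1 := by
  let _ := CStarAlgebra.spectralOrder A
  let _ := CStarAlgebra.spectralOrderedRing A
  have hpos : IsStrictlyPositive a :=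
    CStarAlgebra.isStrictlyPositive_iff_isSelfAdjoint_and_spectrum_pos.2 ha
  simpa only [cpow, CFC.rpow_eq_cfc_real hpos.nonneg] using CFC.conjugate_rpow_neg_one_half a hpos

end FunctionalCalculus

section Metric

variable {A : Type*} [CStarAlgebra A]

theorem dd_mul_star (s : Aˣ) {b : A} (hb : IsPosInv b) :
    dd ((s : A) * star (s : A)) b = ‖clog ((↑s⁻¹ : A) * b * star (↑s⁻¹ : A))‖ := by
  set p : A := cpow ((s : A) * star (s : A)) (-(1/2))
  have hp : p * ((s : A) * star (s : A)) * p = 1 :=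
    cpow_neg_half_mul_mul_cpow_neg_half (isPosInv_mul_star s)
  have hp_star : star p = p := (cfc_predicate (p := IsSelfAdjoint) _ _ : IsSelfAdjoint p)
  have hp_unit : IsUnit p := isUnit_iff_exists_and_exists.2
    ⟨⟨_, by rwa [mul_assoc] at hp⟩, ⟨_, hp⟩⟩
  -- The unitary part of the polar decomposition of `s`.
  have hu : p * s ∈ unitary A := by
    rw [(hp_unit.mul s.isUnit).mem_unitary_iff_mul_star_self, star_mul, hp_star]
    simpa only [mul_assoc] using hp
  have hstar : star (↑s⁻¹ : A) * star (s : A) = 1 := by rw [← star_mul, s.mul_inv, star_one]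
  have hconj : p * b * p =
      p * s * ((↑s⁻¹ : A) * b * star (↑s⁻¹ : A)) * star (p * (s : A)) := by
    simp only [star_mul, hp_star, mul_assoc, Units.mul_inv_cancel_left]
    rw [← mul_assoc (star _), hstar, one_mul]
  rw [dd, hconj]
  exact norm_clog_unitary_conj ⟨_, hu⟩ (hb.conj s⁻¹)

theorem dd_one_left {a : A} (ha : IsPosInv a) : dd 1 a = ‖clog a‖ := by
  simpa using dd_mul_star 1 ha

theorem dd_conj_conj (g : Aˣ) {a b : A} (ha : IsPosInv a) (hb : IsPosInv b) :
    dd ((g : A) * a * star (g : A)) ((g : A) * b * star (g : A)) = dd a b := by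
  obtain ⟨s, rfl⟩ := isPosInv_iff_exists_mul_star.1 ha
  have hstar : star (g : A) * star (↑g⁻¹ : A) = 1 := by rw [← star_mul, g.inv_mul, star_one]
  have h := dd_mul_star (g * s) (hb.conj g)
  rw [dd_mul_star s hb]
  simpa [mul_assoc, hstar, ← mul_assoc (star (g : A))] using h

theorem norm_clog_le_iff {a : Aˣ} (ha : IsPosInv (a : A)) {c : ℝ} (hc : 0 ≤ c) :
    ‖clog (a : A)‖ ≤ c ↔ ‖(a : A)‖ ≤ Real.exp c ∧ ‖(↑a⁻¹ : A)‖ ≤ Real.exp c := by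
  have hsa : IsSelfAdjoint (a : A) := ha.1
  have hinv : ContinuousOn (fun x : ℝ => x⁻¹) (spectrum ℝ (a : A)) :=
    fun x hx => (continuousAt_inv₀ (ha.2 hx).ne').continuousWithinAt
  have hnorm := norm_cfc_le_iff (id : ℝ → ℝ) (a : A) (Real.exp_pos c).le continuousOn_id hsa
  have hnorm_inv := norm_cfc_le_iff (fun x : ℝ => x⁻¹) (a : A) (Real.exp_pos c).le hinv hsa
  rw [cfc_id ℝ (a : A)] at hnorm
  rw [cfc_inv_id a] at hnorm_inv
  rw [clog, norm_cfc_le_iff Real.log (a : A) hc ha.continuousOn_log hsa, hnorm, hnorm_inv,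
    ← forall₂_and]
  refine forall₂_congr fun x hx => ?_
  have hx₀ : 0 < x := ha.2 hx
  rw [id, Real.norm_of_nonneg hx₀.le, Real.norm_of_nonneg (inv_pos.2 hx₀).le, Real.norm_eq_abs,
    ← Real.log_le_iff_le_exp hx₀, ← Real.log_le_iff_le_exp (inv_pos.2 hx₀), Real.log_inv, abs_le']

theorem norm_clog_mul_star_le_iff (s : Aˣ) {c : ℝ} (hc : 0 ≤ c) :
    ‖clog ((s : A) * star (s : A))‖ ≤ c ↔
      ‖(s : A)‖ ^ 2 ≤ Real.exp c ∧ ‖(↑s⁻¹ : A)‖ ^ 2 ≤ Real.exp c := by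
  have h := norm_clog_le_iff (a := s * star s) (by simpa using isPosInv_mul_star s) hc
  simpa [← star_inv, CStarRing.norm_self_mul_star, CStarRing.norm_star_mul_self, ← sq] using h

variable [Nontrivial A]

theorem log_condNum_le_norm_clog (s : Aˣ) :
    Real.log (condNum s) ≤ ‖clog ((s : A) * star (s : A))‖ := by
  obtain ⟨hs, hs_inv⟩ := (norm_clog_mul_star_le_iff s (norm_nonneg _)).1 le_rfl
  rw [Real.log_le_iff_le_exp (one_pos.trans_le (one_le_condNum s)), condNum]
  linarith [two_mul_le_add_sq ‖(s : A)‖ ‖(↑s⁻¹ : A)‖]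

theorem norm_clog_mul_star_of_norm_eq {s : Aˣ} (hs : ‖(s : A)‖ = ‖(↑s⁻¹ : A)‖) :
    ‖clog ((s : A) * star (s : A))‖ = Real.log (condNum s) := by
  have hκ := one_le_condNum s
  refine le_antisymm ?_ (log_condNum_le_norm_clog s)
  rw [norm_clog_mul_star_le_iff s (Real.log_nonneg hκ), Real.exp_log (one_pos.trans_le hκ),
    condNum, sq, sq, ← hs]
  exact ⟨le_rfl, le_rfl⟩

end Metric

section Distance

variable {A : Type*} [CStarAlgebra A] {H : Subgroup Aˣ}

theorem IsUnitarizer.mul_star_mem_fixedSet {s : Aˣ} (hs : IsUnitarizer H s) :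
    (s : A) * star (s : A) ∈ fixedSet H :=
  ⟨isPosInv_mul_star s, fun h hh => (inv_mul_mul_mem_unitary_iff s h).1 (hs h hh)⟩

theorem exists_isUnitarizer_of_mem_fixedSet {a : A} (ha : a ∈ fixedSet H) :
    ∃ s, IsUnitarizer H s ∧ (s : A) * star (s : A) = a := by
  obtain ⟨s, rfl⟩ := isPosInv_iff_exists_mul_star.1 ha.1
  exact ⟨s, fun h hh => (inv_mul_mul_mem_unitary_iff s h).2 (ha.2 h hh), rfl⟩

theorem dd_orbitOne_fixedSet {x y : A} (hx : x ∈ orbitOne H) (hy : y ∈ fixedSet H) :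
    dd x y = dd 1 y := by
  obtain ⟨h, hh, rfl⟩ := hx
  have hone : IsPosInv (1 : A) := by simpa using isPosInv_mul_star (1 : Aˣ)
  simpa [hy.2 h hh] using dd_conj_conj h hone hy.1

theorem one_mem_orbitOne : (1 : A) ∈ orbitOne H := ⟨1, H.one_mem, by simp⟩

theorem distSets_orbitOne_fixedSet (H : Subgroup Aˣ) :
    distSets (orbitOne H) (fixedSet H) = distSet 1 (fixedSet H) := by
  refine congrArg sInf (Set.ext fun r => ⟨?_, ?_⟩)
  · rintro ⟨x, hx, y, hy, rfl⟩
    exact ⟨y, hy, dd_orbitOne_fixedSet hx hy⟩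
  · rintro ⟨y, hy, rfl⟩
    exact ⟨1, one_mem_orbitOne, y, hy, rfl⟩

theorem log_simNum [Nontrivial A] (hH : {s | IsUnitarizer H s}.Nonempty) :
    Real.log (simNum H) = sInf (Real.log '' (condNum '' {s | IsUnitarizer H s})) := by
  have hsim : simNum H = sInf (condNum '' {s | IsUnitarizer H s}) := by
    simp only [simNum, Set.image, Set.mem_ofPred_eq, IsUnitarizer, condNum, eq_comm]
  rw [hsim, log_csInf (hH.image condNum) one_pos]
  rintro _ ⟨s, -, rfl⟩
  exact one_le_condNum s

theorem distSet_one_fixedSet [Nontrivial A] (H : Subgroup Aˣ) :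
    distSet 1 (fixedSet H) = sInf (Real.log '' (condNum '' {s | IsUnitarizer H s})) := by
  apply csInf_eq_csInf_of_forall_exists_le
  · rintro _ ⟨a, ha, rfl⟩
    obtain ⟨s, hs, rfl⟩ := exists_isUnitarizer_of_mem_fixedSet ha
    refine ⟨_, Set.mem_image_of_mem _ (Set.mem_image_of_mem _ hs), ?_⟩
    exact (log_condNum_le_norm_clog s).trans_eq (dd_one_left ha.1).symm
  · rintro _ ⟨_, ⟨s, hs, rfl⟩, rfl⟩
    obtain ⟨r, hr⟩ := exists_norm_smul_eq_norm_inv s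
    have ha := (IsUnitarizer.smul hs r).mul_star_mem_fixedSet
    refine ⟨_, ⟨_, ha, rfl⟩, le_of_eq ?_⟩
    rw [dd_one_left ha.1, norm_clog_mul_star_of_norm_eq hr, condNum_smul]

theorem distSet_of_subsingleton [Subsingleton A] (x : A) (C : Set A) : distSet x C = 0 :=
  le_antisymm
    (Real.sInf_nonpos (by rintro _ ⟨c, -, rfl⟩; exact (norm_of_subsingleton _).le))
    (Real.sInf_nonneg (by rintro _ ⟨c, -, rfl⟩; exact norm_nonneg _))

theorem simNum_of_subsingleton [Subsingleton A] (H : Subgroup Aˣ) : simNum H = 0 :=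
  le_antisymm
    (Real.sInf_nonpos (by rintro _ ⟨s, -, rfl⟩; simp [norm_of_subsingleton]))
    (Real.sInf_nonneg (by rintro _ ⟨s, -, rfl⟩; positivity))

end Distance

/-- `dist(O_H(1), P^H) = dist(1, P^H) = log (Sim H)` for a unitarizable group `H`. -/
theorem stmt5 {A : Type*} [CStarAlgebra A] (H : Subgroup Aˣ)
    (hH : ∃ s : Aˣ, ∀ h ∈ H, (↑s⁻¹ : A) * (h : A) * (s : A) ∈ unitary A) :
    distSets (orbitOne H) (fixedSet H) = distSet 1 (fixedSet H) ∧
      distSet 1 (fixedSet H) = Real.log (simNum H) := by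
  refine ⟨distSets_orbitOne_fixedSet H, ?_⟩
  rcases subsingleton_or_nontrivial A with _ | _
  -- In the zero algebra `Sim(H) = 0`, and the claim reads `0 = Real.log 0`.
  · rw [distSet_of_subsingleton, simNum_of_subsingleton, Real.log_zero]
  · rw [distSet_one_fixedSet, log_simNum hH]
end

section
/- Let A be a unital complex C*-algebra, H a uniformly bounded subgroup of Aˣ, and r, s positive invertible elements of A. For t ∈ [0,1] let γ_t = γ_{r²,s²}(t) = r(r⁻¹ s² r⁻¹)^t r and let H_t = γ_t^{-1/2} H γ_t^{1/2}. Then |H_t| ≤ |r⁻¹ H r|^{1−t} · |s⁻¹ H s|^{t}, where |K| = sup_{k∈K} ‖k‖ denotes the size of a uniformly bounded subgroup K ≤ Aˣ. -/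
/-! The norm `‖g⁻¹ x g‖` depends on the unit `g` only through `g g*`. If `L` is self-adjoint, then
`e^{zL} (e^{zL})* = e^{2 Re(z) L}`, so the entire function `z ↦ e^{-zL} x e^{zL}` has constant norm
on vertical lines, and the three lines theorem shows that `t ↦ ‖e^{-tL} x e^{tL}‖` is log-convex.
Writing `r⁻¹ s² r⁻¹ = e^L`, the point `γ_t` is `g g*` for `g = r e^{tL/2}`, so that conjugating `h`
by `γ_t^{1/2}` has the same norm as conjugating `r⁻¹ h r` by `e^{tL/2}`; the three lines bound
interpolates between `t = 0`, which gives `‖r⁻¹ h r‖`, and `t = 1`, which gives `‖s⁻¹ h s‖`. -/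

lemma bddAbove_range_norm_mul_mul {R : Type*} {ι : Sort*} [NonUnitalSeminormedRing R] {h : ι → R}
    (hh : BddAbove (Set.range fun i ↦ ‖h i‖)) (p q : R) :
    BddAbove (Set.range fun i ↦ ‖p * h i * q‖) := by
  obtain ⟨C, hC⟩ := hh
  refine ⟨‖p‖ * C * ‖q‖, ?_⟩
  rintro _ ⟨i, rfl⟩
  have hi : ‖h i‖ ≤ C := hC ⟨i, rfl⟩
  calc ‖p * h i * q‖ ≤ ‖p‖ * ‖h i‖ * ‖q‖ := norm_mul₃_le
    _ ≤ ‖p‖ * C * ‖q‖ := by gcongr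

lemma norm_units_conj_eq_of_mul_star_eq {A : Type*} [NormedRing A] [StarRing A] [CStarRing A]
    {g k : Aˣ} (hgk : g * star g = k * star k) (x : A) :
    ‖↑g⁻¹ * x * (g : A)‖ = ‖↑k⁻¹ * x * (k : A)‖ := by
  obtain ⟨u, rfl⟩ : ∃ u, g = k * u := ⟨k⁻¹ * g, by group⟩
  have hu_mul_star : u * star u = 1 := by
    calc u * star u = k⁻¹ * (k * u * star (k * u)) * (star k)⁻¹ := by rw [star_mul]; group
      _ = 1 := by rw [hgk]; group
  have hu_star : star u = u⁻¹ := eq_inv_of_mul_eq_one_right hu_mul_star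
  have hu : (u : A) ∈ unitary A := by
    rw [Unitary.mem_iff, ← Units.coe_star, hu_star]
    exact ⟨u.inv_mul, u.mul_inv⟩
  have hu_inv : (↑u⁻¹ : A) ∈ unitary A := by
    simpa only [← hu_star, Units.coe_star] using Unitary.star_mem hu
  calc ‖↑(k * u)⁻¹ * x * (↑(k * u) : A)‖ = ‖↑u⁻¹ * (↑k⁻¹ * x * (k : A)) * (u : A)‖ := by
        simp only [mul_inv_rev, Units.val_mul, mul_assoc]
    _ = ‖↑k⁻¹ * x * (k : A)‖ := by
        rw [CStarRing.norm_mul_mem_unitary _ hu, CStarRing.norm_mem_unitary_mul _ hu_inv]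

section ExpUnit

open NormedSpace

variable {A : Type*} [NormedRing A] [NormedAlgebra ℂ A] [CompleteSpace A]

/-- The exponential of an element of a complex Banach algebra, as a unit with inverse
`exp (-a)`, so that conjugation by exponentials is an instance of conjugation by units. -/
@[simps]
noncomputable def expUnit (a : A) : Aˣ where
  val := exp a
  inv := exp (-a)
  val_inv := by
    let +nondep : NormedAlgebra ℚ A := .restrictScalars ℚ ℂ A
    rw [← exp_add_of_commute (Commute.refl a).neg_right, add_neg_cancel, exp_zero]
  inv_val := by
    let +nondep : NormedAlgebra ℚ A := .restrictScalars ℚ ℂ A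
    rw [← exp_add_of_commute (Commute.refl a).neg_left, neg_add_cancel, exp_zero]

lemma expUnit_add_of_commute {a b : A} (hab : Commute a b) :
    expUnit (a + b) = expUnit a * expUnit b := by
  let +nondep : NormedAlgebra ℚ A := .restrictScalars ℚ ℂ A
  exact Units.ext (exp_add_of_commute hab)

lemma star_expUnit [StarRing A] [ContinuousStar A] (a : A) :
    star (expUnit a) = expUnit (star a) :=
  Units.ext (star_exp a)

lemma expUnit_smul_mul_star [StarRing A] [ContinuousStar A] [StarModule ℂ A] {L : A}
    (hL : IsSelfAdjoint L) (z : ℂ) :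
    expUnit (z • L) * star (expUnit (z • L)) = expUnit ((2 * z.re) • L) := by
  have hcomm : Commute (z • L) (star z • L) := ((Commute.refl L).smul_left z).smul_right _
  rw [star_expUnit, star_smul, hL.star_eq, ← expUnit_add_of_commute hcomm, ← add_smul,
    Complex.star_def, Complex.add_conj, Complex.coe_smul]

lemma differentiable_expUnit_conj (L x : A) :
    Differentiable ℂ fun z : ℂ ↦ ↑(expUnit (z • L))⁻¹ * x * (expUnit (z • L) : A) := by
  have hexp : Differentiable ℂ fun z : ℂ ↦ exp (z • L) :=
    fun z ↦ (hasDerivAt_exp_smul_const L z).differentiableAt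
  have hexp_neg : Differentiable ℂ fun z : ℂ ↦ exp (-(z • L)) := by
    simpa only [Function.comp_def, neg_smul] using hexp.comp differentiable_neg
  exact (hexp_neg.mul_const x).mul hexp

end ExpUnit

section CStarAlgebra

open NormedSpace

variable {A : Type*} [CStarAlgebra A]

lemma norm_expUnit_conj_eq_re {L : A} (hL : IsSelfAdjoint L) (x : A) (z : ℂ) :
    ‖↑(expUnit (z • L))⁻¹ * x * (expUnit (z • L) : A)‖ =
      ‖↑(expUnit (z.re • L))⁻¹ * x * (expUnit (z.re • L) : A)‖ := by
  refine norm_units_conj_eq_of_mul_star_eq ?_ x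
  rw [← Complex.coe_smul z.re, expUnit_smul_mul_star hL, expUnit_smul_mul_star hL,
    Complex.ofReal_re]

lemma norm_expUnit_conj_le {L : A} (hL : IsSelfAdjoint L) (x : A) {t : ℝ}
    (ht : t ∈ Set.Icc (0 : ℝ) 1) :
    ‖↑(expUnit (t • L))⁻¹ * x * (expUnit (t • L) : A)‖ ≤
      ‖x‖ ^ (1 - t) * ‖↑(expUnit L)⁻¹ * x * (expUnit L : A)‖ ^ t := by
  let f : ℂ → A := fun z ↦ ↑(expUnit (z • L))⁻¹ * x * (expUnit (z • L) : A)
  have hf : Differentiable ℂ f := differentiable_expUnit_conj L x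
  have hf_re (z : ℂ) : ‖f z‖ = ‖f z.re‖ := by
    simpa only [f, Complex.coe_smul] using norm_expUnit_conj_eq_re hL x z
  have hf_zero : ‖f 0‖ = ‖x‖ := by simp [f]
  have hf_one : ‖f 1‖ = ‖↑(expUnit L)⁻¹ * x * (expUnit L : A)‖ := by simp only [f, one_smul]
  have hbdd : BddAbove ((norm ∘ f) '' Complex.HadamardThreeLines.verticalClosedStrip 0 1) := by
    have hcont : Continuous fun u : ℝ ↦ ‖f u‖ :=
      (hf.continuous.comp Complex.continuous_ofReal).norm
    refine ((isCompact_Icc (a := (0 : ℝ)) (b := 1)).bddAbove_image hcont.continuousOn).mono ?_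
    rintro _ ⟨z, hz, rfl⟩
    exact ⟨z.re, hz, (hf_re z).symm⟩
  have hthree := Complex.HadamardThreeLines.norm_le_interp_of_mem_verticalClosedStrip₀₁' f
    (z := t) ht hf.diffContOnCl hbdd
    (fun z (hz : z.re = 0) ↦ by rw [hf_re, hz, Complex.ofReal_zero])
    (fun z (hz : z.re = 1) ↦ by rw [hf_re, hz, Complex.ofReal_one])
  simpa only [Complex.ofReal_re, hf_zero, hf_one, f, Complex.coe_smul] using hthree

lemma exists_isSelfAdjoint_expUnit_eq_mul_star (g : Aˣ) :
    ∃ L : A, IsSelfAdjoint L ∧ expUnit L = g * star g := by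
  let : PartialOrder A := CStarAlgebra.spectralOrder A
  have : StarOrderedRing A := CStarAlgebra.spectralOrderedRing A
  have hpos : IsStrictlyPositive ((g : A) * star (g : A)) :=
    ⟨mul_star_self_nonneg _, g.isUnit.mul g.isUnit.star⟩
  exact ⟨CFC.log _, .log, Units.ext (CFC.exp_log _ hpos)⟩

lemma cpow_expUnit {L : A} (hL : IsSelfAdjoint L) (t : ℝ) :
    cpow (expUnit L : A) t = expUnit (t • L) := by
  have hcont : ContinuousOn (fun x : ℝ ↦ x ^ t) (Real.exp '' spectrum ℝ L) := by
    rintro _ ⟨x, -, rfl⟩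
    exact (Real.continuousAt_rpow_const _ _ (.inl (Real.exp_pos x).ne')).continuousWithinAt
  have htL : cfc (fun x : ℝ ↦ t * x) L = t • L := cfc_const_mul_id t L
  calc cpow (exp L) t = cfc (fun x ↦ Real.exp x ^ t) L := by
        rw [cpow, ← CFC.real_exp_eq_normedSpace_exp hL, ← cfc_comp' _ Real.exp L hcont]
    _ = cfc (fun x ↦ Real.exp (t * x)) L := by simp only [← Real.exp_mul, mul_comm t]
    _ = exp (t • L) := by
        rw [cfc_comp' Real.exp (t * ·) L, htL,
          CFC.real_exp_eq_normedSpace_exp ((IsSelfAdjoint.all t).smul hL)]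

lemma norm_cpow_mul_star_conj (g : Aˣ) (x : A) :
    ‖cpow ((g : A) * star (g : A)) (-(1/2)) * x * cpow ((g : A) * star (g : A)) (1/2)‖ =
      ‖↑g⁻¹ * x * (g : A)‖ := by
  obtain ⟨L, hL, hLg⟩ := exists_isSelfAdjoint_expUnit_eq_mul_star g
  have hinv : expUnit ((-(1/2) : ℝ) • L) = (expUnit ((1/2 : ℝ) • L))⁻¹ := by
    ext; simp only [val_expUnit, val_inv_expUnit, neg_smul]
  have hroot : expUnit ((1/2 : ℝ) • L) * star (expUnit ((1/2 : ℝ) • L)) = g * star g := by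
    rw [← Complex.coe_smul, expUnit_smul_mul_star hL, Complex.ofReal_re, ← hLg]
    norm_num
  rw [← Units.coe_star, ← Units.val_mul, ← hLg, cpow_expUnit hL, cpow_expUnit hL, hinv,
    norm_units_conj_eq_of_mul_star_eq hroot]

/-- The geodesic `γ_{r r*, s s*}(t) = r (r⁻¹ s s* r*⁻¹)^t r*` between positive invertible elements
factored through arbitrary units `r` and `s`; for self-adjoint `r` and `s` it is `gammaRS r s`. -/
noncomputable def mulStarGeodesic (r s : Aˣ) (t : ℝ) : A :=
  r * cpow ((↑(r⁻¹ * s) : A) * star (↑(r⁻¹ * s) : A)) t * star (r : A)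

lemma gammaRS_eq_mulStarGeodesic {r s : Aˣ} (hr : IsSelfAdjoint (r : A))
    (hs : IsSelfAdjoint (s : A)) (t : ℝ) : gammaRS r s t = mulStarGeodesic r s t := by
  have hr_inv : star (↑r⁻¹ : A) = ↑r⁻¹ := by
    rw [← Units.coe_star_inv, show star r = r from Units.ext hr]
  simp only [gammaRS, mulStarGeodesic, Units.val_mul, star_mul, hr.star_eq, hs.star_eq, hr_inv,
    mul_assoc]

lemma norm_mulStarGeodesic_conj_le (r s : Aˣ) (x : A) {t : ℝ} (ht : t ∈ Set.Icc (0 : ℝ) 1) :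
    ‖cpow (mulStarGeodesic r s t) (-(1/2)) * x * cpow (mulStarGeodesic r s t) (1/2)‖ ≤
      ‖↑r⁻¹ * x * (r : A)‖ ^ (1 - t) * ‖↑s⁻¹ * x * (s : A)‖ ^ t := by
  obtain ⟨L, hL, hLrs⟩ := exists_isSelfAdjoint_expUnit_eq_mul_star (r⁻¹ * s)
  let M : A := (1/2 : ℝ) • L
  have hM : IsSelfAdjoint M := (IsSelfAdjoint.all _).smul hL
  have hexp (u : ℝ) : expUnit (u • M) * star (expUnit (u • M)) = expUnit (u • L) := by
    rw [← Complex.coe_smul u, expUnit_smul_mul_star hM, Complex.ofReal_re, smul_smul]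
    congr 2
    ring
  have hgeo : mulStarGeodesic r s t =
      (↑(r * expUnit (t • M)) : A) * star (↑(r * expUnit (t • M)) : A) := by
    rw [mulStarGeodesic, ← Units.coe_star (r⁻¹ * s), ← Units.val_mul, ← hLrs, cpow_expUnit hL,
      ← hexp]
    simp only [Units.val_mul, Units.coe_star, star_mul, mul_assoc]
  have hend : r * expUnit M * star (r * expUnit M) = s * star s := by
    have hM_mul_star : expUnit M * star (expUnit M) = r⁻¹ * s * star (r⁻¹ * s) := by
      simpa only [one_smul, hLrs] using hexp 1
    calc r * expUnit M * star (r * expUnit M)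
        = r * (expUnit M * star (expUnit M)) * star r := by simp only [star_mul, mul_assoc]
      _ = s * star s := by rw [hM_mul_star, star_mul, star_inv]; group
  have hconj (g : Aˣ) : ‖↑(r * g)⁻¹ * x * (↑(r * g) : A)‖ =
      ‖↑g⁻¹ * (↑r⁻¹ * x * (r : A)) * (g : A)‖ := by
    simp only [mul_inv_rev, Units.val_mul, mul_assoc]
  rw [hgeo, norm_cpow_mul_star_conj, hconj, ← norm_units_conj_eq_of_mul_star_eq hend, hconj]
  exact norm_expUnit_conj_le hM _ ht

theorem stmt12_general {ι : Sort*} {h : ι → A} (hh : BddAbove (Set.range fun i ↦ ‖h i‖))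
    (r s : Aˣ) {t : ℝ} (ht : t ∈ Set.Icc (0 : ℝ) 1) :
    ⨆ i, ‖cpow (mulStarGeodesic r s t) (-(1/2)) * h i * cpow (mulStarGeodesic r s t) (1/2)‖ ≤
      (⨆ i, ‖↑r⁻¹ * h i * (r : A)‖) ^ (1 - t) * (⨆ i, ‖↑s⁻¹ * h i * (s : A)‖) ^ t := by
  have hr_nonneg : 0 ≤ ⨆ i, ‖↑r⁻¹ * h i * (r : A)‖ := Real.iSup_nonneg fun _ ↦ norm_nonneg _
  have hs_nonneg : 0 ≤ ⨆ i, ‖↑s⁻¹ * h i * (s : A)‖ := Real.iSup_nonneg fun _ ↦ norm_nonneg _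
  refine Real.iSup_le (fun i ↦ (norm_mulStarGeodesic_conj_le r s (h i) ht).trans ?_)
    (by positivity)
  gcongr
  · exact sub_nonneg.2 ht.2
  · exact le_ciSup (bddAbove_range_norm_mul_mul hh _ _) i
  · exact ht.1
  · exact le_ciSup (bddAbove_range_norm_mul_mul hh _ _) i

lemma normSet_eq_range (H : Subgroup Aˣ) : normSet H = Set.range fun h : H ↦ ‖((h : Aˣ) : A)‖ := by
  ext c
  simp [normSet, eq_comm]

lemma sizeConj_eq_iSup (H : Subgroup Aˣ) (p q : A) :
    sizeConj H p q = ⨆ h : H, ‖p * ((h : Aˣ) : A) * q‖ := by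
  rw [sizeConj, iSup]
  congr 1
  ext c
  simp [eq_comm]

end CStarAlgebra

/-- Geometric interpolation for the size: `|H_t| ≤ |r⁻¹ H r|^{1-t} |s⁻¹ H s|^t`,
where `H_t = γ_t^{-1/2} H γ_t^{1/2}` along the geodesic `γ_t = γ_{r², s²}(t)`. -/
theorem stmt12 {A : Type*} [CStarAlgebra A] (H : Subgroup Aˣ)
    (hbdd : BddAbove (normSet H)) (r s : Aˣ)
    (hr : IsPosInv (r : A)) (hs : IsPosInv (s : A))
    (t : ℝ) (ht : t ∈ Set.Icc (0 : ℝ) 1) :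
    sizeConj H (cpow (gammaRS r s t) (-(1/2))) (cpow (gammaRS r s t) (1/2)) ≤
      sizeConj H (↑r⁻¹ : A) (r : A) ^ (1 - t) * sizeConj H (↑s⁻¹ : A) (s : A) ^ t := by
  simp only [sizeConj_eq_iSup, gammaRS_eq_mulStarGeodesic hr.1 hs.1]
  exact stmt12_general (normSet_eq_range H ▸ hbdd) r s ht
end
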